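/- Let R be a coherent commutative ring, 𝔗 a torsion theory over R, 𝔞 a finitely generated ideal of R, and M an R-module. Then 𝔗-Egrade_R(𝔞,M) = 𝔗-Hgrade_R(𝔞,M). -/

import Mathlib

open CategoryTheory

universe u

noncomputable section

/-- A torsion theory over `R`: a class of `R`-modules closed under isomorphism, submodules,
quotient modules, extensions, and directed colimits (formulated as closure under directed
unions of submodules). -/
structure IsTorsionTheory (R : Type u) [CommRing R] (T : Set (ModuleCat.{u} R)) : Prop where
  mem_of_iso : ∀ {N N' : ModuleCat.{u} R}, (N ≅ N') → N ∈ T → N' ∈ T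
  submodule_mem : ∀ {N : ModuleCat.{u} R}, N ∈ T → ∀ S : Submodule R N,
    ModuleCat.of R S ∈ T
  quotient_mem : ∀ {N : ModuleCat.{u} R}, N ∈ T → ∀ S : Submodule R N,
    ModuleCat.of R (N ⧸ S) ∈ T
  ext_mem : ∀ {N : ModuleCat.{u} R} (S : Submodule R N),
    ModuleCat.of R S ∈ T → ModuleCat.of R (N ⧸ S) ∈ T → N ∈ T
  directed_mem : ∀ {N : ModuleCat.{u} R} {ι : Type u} [Nonempty ι] (S : ι → Submodule R N),
    Directed (· ≤ ·) S → (∀ i, ModuleCat.of R (S i) ∈ T) → iSup S = ⊤ → N ∈ T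

variable {R : Type u} [CommRing R]

/-- A commutative ring is coherent if every finitely generated ideal is finitely presented. -/
def IsCoherentRing (R : Type u) [CommRing R] : Prop :=
  ∀ I : Ideal R, I.FG → Module.FinitePresentation R I

/-- The `𝔗`-Ext grade of `𝔞` on `M`: the infimum of the set of `i` such that
`Ext^i_R(R/𝔞, M) ∉ 𝔗` (with `inf ∅ = +∞`). -/
def TEgrade (T : Set (ModuleCat.{u} R)) (a : Ideal R) (M : Type u)
    [AddCommGroup M] [Module R M] : ℕ∞ :=
  sInf ((↑· : ℕ → ℕ∞) '' {i | ((Ext R (ModuleCat.{u} R) i).obj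
    (Opposite.op (ModuleCat.of R (R ⧸ a)))).obj (ModuleCat.of R M) ∉ T})

/-- The `𝔗`-local cohomology grade of `𝔞` on `M`: the infimum of the set of `i` such that
`H^i_𝔞(M) = colim_n Ext^i_R(R/𝔞ⁿ, M) ∉ 𝔗` (with `inf ∅ = +∞`). -/
def THgrade (T : Set (ModuleCat.{u} R)) (a : Ideal R) (M : Type u)
    [AddCommGroup M] [Module R M] : ℕ∞ :=
  sInf ((↑· : ℕ → ℕ∞) '' {i | (localCohomology a i).obj (ModuleCat.of R M) ∉ T})

/-! Write `𝔞 = (s)` with `s` finite. Both grades are read off from the modules `G (Ext^i(-, M))`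
for a functor `G` on functors of `X`: evaluation at `R ⧸ 𝔞` for the Ext grade, and the colimit of
the evaluations at `R ⧸ 𝔞ᵏ` for the local cohomology grade. Two classes of coefficient modules are
harmless for either `G`: over a coherent ring, `Ext^i(X, N) ∈ 𝔗` for `X` finitely presented and
`N ∈ 𝔗`, and `Ext^i(X, M_r) = 0` for `r ∈ 𝔞` and `X` killed by a power of `𝔞`.

If `i = 0` causes no obstruction for one `G`, then `(0 :_M 𝔞) ∈ 𝔗`. The kernel of
`M ⟶ ∏_{r ∈ s} M_r` is `𝔞`-power torsion, so it is an increasing union of iterated extensions of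
submodules of powers of `(0 :_M 𝔞)` and lies in `𝔗` as well. Hence for both `G`, up to `𝔗`, the
module `G (Ext^{i+1}(-, M))` is `G (Ext^i(-, C))` with `C` the cokernel of this map, the case
`i = 0` holds for the other `G` too, and induction applies to `C`. -/

section SerreClass

open Limits

variable (P : ObjectProperty (ModuleCat.{u} R)) [P.IsSerreClass]
  {A B C : Type u} [AddCommGroup A] [Module R A] [AddCommGroup B] [Module R B]
  [AddCommGroup C] [Module R C]

lemma prop_of_injective (f : A →ₗ[R] B) (hf : Function.Injective f)
    (hB : P (ModuleCat.of R B)) : P (ModuleCat.of R A) :=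
  have : Mono (ModuleCat.ofHom f) := (ModuleCat.mono_iff_injective _).2 hf
  P.prop_of_mono (ModuleCat.ofHom f) hB

lemma prop_of_surjective (f : A →ₗ[R] B) (hf : Function.Surjective f)
    (hA : P (ModuleCat.of R A)) : P (ModuleCat.of R B) :=
  have : Epi (ModuleCat.ofHom f) := (ModuleCat.epi_iff_surjective _).2 hf
  P.prop_of_epi (ModuleCat.ofHom f) hA

lemma prop_of_exact (f : A →ₗ[R] B) (g : B →ₗ[R] C) (h : Function.Exact f g)
    (hA : P (ModuleCat.of R A)) (hC : P (ModuleCat.of R C)) : P (ModuleCat.of R B) :=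
  P.prop_X₂_of_exact (ModuleCat.shortComplex_exact
    (ModuleCat.shortComplexOfCompEqZero f g h.linearMap_comp_eq_zero) h) hA hC

lemma prop_of_subsingleton [Subsingleton A] : P (ModuleCat.of R A) :=
  P.prop_of_isZero (ModuleCat.isZero_of_subsingleton _)

lemma prop_pi {ι : Type u} [Finite ι] (X : ι → Type u) [∀ i, AddCommGroup (X i)]
    [∀ i, Module R (X i)] (h : ∀ i, P (ModuleCat.of R (X i))) : P (ModuleCat.of R (∀ i, X i)) :=
  Module.pi_induction' R (motive := fun N _ _ => P (ModuleCat.of R N))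
    (fun N _ _ => P (ModuleCat.of R N)) (fun e => prop_of_injective P _ e.symm.injective)
    (fun e => prop_of_injective P _ e.symm.injective) (prop_of_subsingleton P)
    (prop_of_exact P _ _ .inl_snd) X h

lemma prop_of_monotone [P.IsClosedUnderColimitsOfShape ℕ] (S : ℕ →o Submodule R A)
    (hS : ∀ k, P (ModuleCat.of R (S k))) (hA : ∀ x, ∃ k, x ∈ S k) : P (ModuleCat.of R A) := by
  let incl (k : ℕ) : ModuleCat.of R (S k) ⟶ ModuleCat.of R (S (k + 1)) :=
    ModuleCat.ofHom (Submodule.inclusion (S.monotone k.le_succ))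
  let c : Cocone (Functor.ofSequence incl) :=
    { pt := ModuleCat.of R A
      ι := NatTrans.ofSequence (fun k => ModuleCat.ofHom (S k).subtype) fun k => by
        rw [Functor.ofSequence_map_homOfLE_succ]
        rfl }
  have : Epi (colimit.desc _ c) := (ModuleCat.epi_iff_surjective _).2 fun x => by
    obtain ⟨k, hk⟩ := hA x
    exact ⟨colimit.ι (Functor.ofSequence incl) k ⟨x, hk⟩,
      ConcreteCategory.congr_hom (colimit.ι_desc c k) ⟨x, hk⟩⟩
  exact P.prop_of_epi (colimit.desc _ c) (P.prop_colimit _ hS)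

end SerreClass

section Torsion

open Module Submodule

variable (P : ObjectProperty (ModuleCat.{u} R)) [P.IsSerreClass] {s : Finset R}
  {A B : Type u} [AddCommGroup A] [Module R A] [AddCommGroup B] [Module R B]

lemma prop_torsionBySet_of_injective (t : Set R) (f : A →ₗ[R] B) (hf : Function.Injective f)
    (hB : P (ModuleCat.of R (torsionBySet R B t))) : P (ModuleCat.of R (torsionBySet R A t)) := by
  have mem_torsion (x : A) (hx : x ∈ torsionBySet R A t) : f x ∈ torsionBySet R B t := by
    rw [mem_torsionBySet_iff] at hx ⊢
    simp only [← map_smul, hx, map_zero, implies_true]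
  exact prop_of_injective P (f.restrict mem_torsion)
    ((LinearMap.injective_restrict_iff _).2 (by simp [LinearMap.ker_eq_bot.2 hf])) hB

lemma prop_of_isTorsionBySet_span_pow (hA : P (ModuleCat.of R (torsionBySet R A (s : Set R))))
    {k : ℕ} (hk : IsTorsionBySet R A ((Ideal.span (s : Set R)) ^ k : Ideal R)) :
    P (ModuleCat.of R A) := by
  induction k generalizing A with
  | zero =>
    have : Subsingleton A := subsingleton_of_forall_eq 0 fun x => by
      simpa using hk (x := x) (a := ⟨1, by simp⟩)
    exact prop_of_subsingleton P
  | succ k ih =>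
    let f : A →ₗ[R] ∀ r : s, LinearMap.range (LinearMap.lsmul R A r) :=
      LinearMap.pi fun r => (LinearMap.lsmul R A r).rangeRestrict
    have exact_f : Function.Exact (torsionBySet R A (s : Set R)).subtype f := fun x => by
      simp [f, funext_iff, Subtype.ext_iff]
    refine prop_of_exact P _ f exact_f hA (prop_pi P (fun _ => LinearMap.range _) fun r => ih ?_ ?_)
    · exact prop_torsionBySet_of_injective P _ (LinearMap.range _).subtype
        (Submodule.subtype_injective _) hA
    · rintro ⟨_, y, rfl⟩ ⟨t, ht⟩
      have : t * r ∈ Ideal.span (s : Set R) ^ (k + 1) :=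
        Ideal.mul_mem_mul ht (Ideal.subset_span r.2)
      exact Subtype.ext ((mul_smul _ _ _).symm.trans (hk (a := ⟨_, this⟩)))

lemma prop_of_forall_mem_torsionBySet_pow [P.IsClosedUnderColimitsOfShape ℕ]
    (hA : P (ModuleCat.of R (torsionBySet R A (s : Set R))))
    (h : ∀ x : A, ∃ k, x ∈ torsionBySet R A ((Ideal.span (s : Set R)) ^ k : Ideal R)) :
    P (ModuleCat.of R A) :=
  prop_of_monotone P
    ⟨fun k => torsionBySet R A ((Ideal.span (s : Set R)) ^ k : Ideal R),
      fun k l hkl => torsionBySet_le_torsionBySet_pow k l hkl _⟩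
    (fun _ => prop_of_isTorsionBySet_span_pow P
      (prop_torsionBySet_of_injective P _ _ (Submodule.subtype_injective _) hA)
      (torsionBySet_isTorsionBySet _)) h

end Torsion

section LinearExt

open Abelian

variable (R : Type*) [CommRing R] {C : Type*} [Category* C] [Abelian C] [Linear R C]
  [HasExt.{u} C]

/-- The contravariant functor `X ↦ Ext^n(X, Y)` with values in `R`-modules. -/
@[simps]
def linearExt (n : ℕ) (Y : C) : Cᵒᵖ ⥤ ModuleCat.{u} R where
  obj X := ModuleCat.of R (Ext.{u} X.unop Y n)
  map f := ModuleCat.ofHom ((Ext.mk₀ f.unop).precompOfLinear R Y (zero_add n))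
  map_id X := by
    ext x
    simp
  map_comp f g := by
    ext x
    simp [Ext.mk₀_comp_mk₀_assoc]

/-- Postcomposition with an extension class, as a natural transformation between
functors `linearExt`. -/
@[simps]
def linearExtPostcomp {Y Z : C} {n m p : ℕ} (β : Ext.{u} Y Z m) (h : n + m = p) :
    linearExt R n Y ⟶ linearExt R p Z where
  app X := ModuleCat.ofHom (β.postcompOfLinear R X.unop h)
  naturality X X' f := by
    ext x
    exact Ext.comp_assoc (Ext.mk₀ f.unop) x β (zero_add n) h (by lia)

lemma linearExtPostcomp_comp {Y Z W : C} {n m m' k p q : ℕ} (β : Ext.{u} Y Z m)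
    (γ : Ext.{u} Z W m') (hp : n + m = p) (hk : m + m' = k) (hq : p + m' = q) :
    linearExtPostcomp R β hp ≫ linearExtPostcomp R γ hq =
      linearExtPostcomp R (β.comp γ hk) (by lia : n + k = q) := by
  ext X x
  exact Ext.comp_assoc x β γ hp hk (by lia)

lemma linearExtPostcomp_zero {Y Z : C} {n m p : ℕ} (h : n + m = p) :
    linearExtPostcomp R (0 : Ext.{u} Y Z m) h = 0 := by
  ext X x
  exact Ext.comp_zero x _ _ _ h

end LinearExt

section ExactSequences

open Abelian

lemma exact_of_evaluation_exact {J A : Type*} [Category* J] [Category* A] [Abelian A]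
    {S : ShortComplex (J ⥤ A)} (h : ∀ j, (S.map ((evaluation J A).obj j)).Exact) : S.Exact := by
  rw [ShortComplex.exact_iff_isZero_homology, Functor.isZero_iff]
  exact fun j => ((ShortComplex.exact_iff_isZero_homology _).1 (h j)).of_iso
    (S.mapHomologyIso ((evaluation J A).obj j)).symm

variable {C : Type*} [Category* C] [Abelian C]

lemma shortExact_kernel_coimage {Y Z : C} (f : Y ⟶ Z) :
    (ShortComplex.mk (Limits.kernel.ι f) (Abelian.coimage.π f)
      (Limits.cokernel.condition _)).ShortExact where
  exact := ShortComplex.exact_cokernel _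

lemma factorThruCoimage_cokernel_π {Y Z : C} (f : Y ⟶ Z) :
    Abelian.factorThruCoimage f ≫ Limits.cokernel.π f = 0 := by
  simp [← cancel_epi (Abelian.coimage.π f)]

lemma shortExact_coimage_cokernel {Y Z : C} (f : Y ⟶ Z) :
    (ShortComplex.mk _ _ (factorThruCoimage_cokernel_π f)).ShortExact where
  exact := (ShortComplex.exact_iff_of_epi_of_isIso_of_mono
    (S₁ := .mk f _ (Limits.cokernel.condition f))
    (S₂ := .mk _ _ (factorThruCoimage_cokernel_π f))
    { τ₁ := Abelian.coimage.π f, τ₂ := 𝟙 _, τ₃ := 𝟙 _ }).1 (ShortComplex.exact_cokernel f)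

variable (R : Type*) [CommRing R] [Linear R C] [HasExt.{u} C]

/-- Two composable classes with product zero give a complex of functors `linearExt`. -/
abbrev linearExtShortComplex {X Y Z : C} {n m m' k p q : ℕ} (β : Ext.{u} X Y m)
    (γ : Ext.{u} Y Z m') {hk : m + m' = k} (hβγ : β.comp γ hk = 0) (hp : n + m = p)
    (hq : p + m' = q) : ShortComplex (Cᵒᵖ ⥤ ModuleCat.{u} R) :=
  ShortComplex.mk (linearExtPostcomp R β hp) (linearExtPostcomp R γ hq)
    (by rw [linearExtPostcomp_comp R β γ hp hk hq, hβγ, linearExtPostcomp_zero])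

lemma mk₀_f_comp_mk₀_g (S : ShortComplex C) :
    (Ext.mk₀ S.f).comp (Ext.mk₀ S.g) (add_zero 0) = 0 := by
  rw [Ext.mk₀_comp_mk₀, S.zero, Ext.mk₀_zero]

variable {S : ShortComplex C} (hS : S.ShortExact) (n : ℕ)

lemma linearExt_exact₁ : (linearExtShortComplex R hS.extClass (Ext.mk₀ S.f) hS.extClass_comp
    (rfl : n + 1 = n + 1) (add_zero _)).Exact :=
  exact_of_evaluation_exact fun X => (ShortComplex.moduleCat_exact_iff _).2 fun x hx =>
    Ext.covariant_sequence_exact₁ X.unop hS x hx rfl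

lemma linearExt_exact₂ (hS : S.ShortExact) : (linearExtShortComplex R (Ext.mk₀ S.f) (Ext.mk₀ S.g)
    (mk₀_f_comp_mk₀_g S) (add_zero n) (add_zero n)).Exact :=
  exact_of_evaluation_exact fun X => (ShortComplex.moduleCat_exact_iff _).2 fun x hx =>
    Ext.covariant_sequence_exact₂ X.unop hS x hx

lemma linearExt_exact₃ : (linearExtShortComplex R (Ext.mk₀ S.g) hS.extClass hS.comp_extClass
    (add_zero n) rfl).Exact :=
  exact_of_evaluation_exact fun X => (ShortComplex.moduleCat_exact_iff _).2 fun x hx =>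
    Ext.covariant_sequence_exact₃ X.unop hS x rfl hx

lemma mono_linearExtPostcomp_zero {Y Z : C} (f : Y ⟶ Z) [Mono f] :
    Mono (linearExtPostcomp R (Ext.mk₀ f) (add_zero 0)) := by
  have (X : Cᵒᵖ) : Mono ((linearExtPostcomp R (Ext.mk₀ f) (add_zero 0)).app X) :=
    (ModuleCat.mono_iff_injective _).2 (Ext.postcomp_mk₀_injective_of_mono X.unop f)
  exact NatTrans.mono_of_mono_app _

variable {R} {A : Type*} [Category* A] [Abelian A] (P : ObjectProperty A) [P.IsSerreClass]
  (G : (Cᵒᵖ ⥤ ModuleCat.{u} R) ⥤ A) [G.PreservesZeroMorphisms] [G.PreservesHomology]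

lemma prop_linearExt_zero_of_mono {Y Z : C} (f : Y ⟶ Z) [Mono f]
    (hZ : P (G.obj (linearExt R 0 Z))) : P (G.obj (linearExt R 0 Y)) :=
  have := mono_linearExtPostcomp_zero R f
  P.prop_of_mono (G.map (linearExtPostcomp R (Ext.mk₀ f) (add_zero 0))) hZ

lemma prop_linearExt_X₁_iff (hS : S.ShortExact) (h₂ : ∀ i, P (G.obj (linearExt R i S.X₂))) :
    P (G.obj (linearExt R (n + 1) S.X₁)) ↔ P (G.obj (linearExt R n S.X₃)) :=
  ⟨fun h₁ => P.prop_X₂_of_exact ((linearExt_exact₃ R hS n).map G) (h₂ n) h₁,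
    fun h₃ => P.prop_X₂_of_exact ((linearExt_exact₁ R hS n).map G) h₃ (h₂ (n + 1))⟩

lemma prop_linearExt_X₂_iff (hS : S.ShortExact) (h₁ : ∀ i, P (G.obj (linearExt R i S.X₁))) :
    P (G.obj (linearExt R n S.X₂)) ↔ P (G.obj (linearExt R n S.X₃)) :=
  ⟨fun h₂ => P.prop_X₂_of_exact ((linearExt_exact₃ R hS n).map G) h₂ (h₁ (n + 1)),
    fun h₃ => P.prop_X₂_of_exact ((linearExt_exact₂ R n hS).map G) (h₁ n) h₃⟩

variable {Y Z : C} (f : Y ⟶ Z) (hK : ∀ i, P (G.obj (linearExt R i (Limits.kernel f))))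
  (hZ : ∀ i, P (G.obj (linearExt R i Z)))
include hK hZ

lemma prop_linearExt_zero_of_kernel : P (G.obj (linearExt R 0 Y)) :=
  (prop_linearExt_X₂_iff 0 P G (shortExact_kernel_coimage f) hK).2
    (prop_linearExt_zero_of_mono P G (Abelian.factorThruCoimage f) (hZ 0))

lemma prop_linearExt_succ_iff_cokernel :
    P (G.obj (linearExt R (n + 1) Y)) ↔ P (G.obj (linearExt R n (Limits.cokernel f))) :=
  (prop_linearExt_X₂_iff (n + 1) P G (shortExact_kernel_coimage f) hK).trans
    (prop_linearExt_X₁_iff n P G (shortExact_coimage_cokernel f) hZ)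

end ExactSequences

section Comparison

open Abelian

variable {R : Type*} [CommRing R] {C : Type*} [Category.{u} C] [Abelian C] [Linear R C]

/-- The map `Hom(L, Y) ⟶ Hom(K, Y)` of complexes induced by a map `K ⟶ L` of complexes. -/
def linearYonedaObjMap {K L : ChainComplex C ℕ} (φ : K ⟶ L) (Y : C) :
    L.linearYonedaObj R Y ⟶ K.linearYonedaObj R Y :=
  (HomologicalComplex.unopFunctor _ _).map
    ((((linearYoneda R C).obj Y).rightOp.mapHomologicalComplex _).map φ).op

lemma isoExt_inv_naturality [EnoughProjectives C] {X X' : C} {g : X' ⟶ X}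
    {P' : ProjectiveResolution X'} {P : ProjectiveResolution X}
    (φ : ProjectiveResolution.Hom P' P g) (n : ℕ) (Y : C) :
    (P.isoExt n Y).inv ≫ ((_root_.Ext R C n).map g.op).app Y =
      HomologicalComplex.homologyMap (linearYonedaObjMap φ.hom Y) n ≫ (P'.isoExt n Y).inv := by
  have derived_naturality := congrArg Quiver.Hom.unop
    (ProjectiveResolution.isoLeftDerivedObj_hom_naturality g P' P φ.hom
      (by simpa using φ.hom_f_zero_comp_π_f_zero) ((linearYoneda R C).obj Y).rightOp n)
  have op_naturality := congrArg Quiver.Hom.unop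
    (HomologicalComplex.homologyOp_hom_naturality (linearYonedaObjMap (R := R) φ.hom Y) n)
  simp only [unop_comp] at derived_naturality op_naturality
  refine (Category.assoc ((P.complex.linearYonedaObj R Y).homologyOp n).hom.unop _ _).trans ?_
  refine (congrArg _ derived_naturality).trans ?_
  refine (Category.assoc _ _ _).symm.trans ?_
  exact (congrArg (fun t => t ≫ (P'.isoLeftDerivedObj
    ((linearYoneda R C).obj Y).rightOp n).hom.unop) op_naturality).trans (Category.assoc _ _ _)

variable [HasExt.{u} C] {X Y : C} (P : ProjectiveResolution X)

lemma extMk_zero_eq_zero_iff (f : P.complex.X 0 ⟶ Y) (hf : P.complex.d 1 0 ≫ f = 0) :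
    P.extMk f 1 rfl hf = 0 ↔ f = 0 := by
  rw [← P.extEquivCohomologyClass.apply_eq_iff_eq,
    ProjectiveResolution.extEquivCohomologyClass_extMk,
    ProjectiveResolution.extEquivCohomologyClass_zero,
    CochainComplex.HomComplex.CohomologyClass.mk_eq_zero_iff,
    CochainComplex.HomComplex.Cocycle.toSingleMk_mem_coboundaries_iff _ _ _ _ _ 1 (by simp)]
  have isZero_X_one : Limits.IsZero (P.cochainComplex.X 1) :=
    P.cochainComplex.isZero_of_isStrictlyLE 0 1 (by simp)
  constructor
  · rintro ⟨g, hg⟩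
    rw [isZero_X_one.eq_of_src g 0, Limits.comp_zero] at hg
    rw [← cancel_epi (P.cochainComplexXIso (-(0 : ℕ)) 0 rfl).hom, ← hg, Limits.comp_zero]
  · rintro rfl
    exact ⟨0, by simp⟩

lemma extMk_eq_zero_iff_exists {n : ℕ} (f : P.complex.X n ⟶ Y)
    (hf : P.complex.d (n + 1) n ≫ f = 0) :
    P.extMk f (n + 1) rfl hf = 0 ↔
      ∃ g : P.complex.X ((ComplexShape.up ℕ).prev n) ⟶ Y, P.complex.d n _ ≫ g = f := by
  cases n with
  | zero =>
    have hd : P.complex.d 0 ((ComplexShape.up ℕ).prev 0) = 0 := P.complex.shape _ _ (by simp)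
    simp only [hd, Limits.zero_comp, exists_const_iff, eq_comm (a := (0 : P.complex.X 0 ⟶ Y))]
    exact (extMk_zero_eq_zero_iff P f hf).trans (and_iff_right ⟨0⟩).symm
  | succ n => rw [P.extMk_eq_zero_iff f _ rfl hf n rfl, CochainComplex.prev_nat_succ]

lemma smul_extMk {n : ℕ} (r : R) (f : P.complex.X n ⟶ Y) (hf : P.complex.d (n + 1) n ≫ f = 0) :
    P.extMk (r • f) (n + 1) rfl (by simp [hf]) = r • P.extMk f (n + 1) rfl hf := by
  rw [Ext.smul_eq_comp_mk₀, P.extMk_comp_mk₀]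
  simp

variable (R Y) (n : ℕ)

/-- The class in `Ext^n(X, Y)` represented by an `n`-cocycle of the complex `Hom(P, Y)`. -/
def extMkLinearMap : LinearMap.ker ((P.complex.linearYonedaObj R Y).d n (n + 1)).hom →ₗ[R]
    Ext.{u} X Y n where
  toFun f := P.extMk f.1 (n + 1) rfl f.2
  map_add' _ _ := (P.add_extMk ..).symm
  map_smul' r f := smul_extMk P r f.1 f.2

lemma extMkLinearMap_eq_zero_iff
    (f : LinearMap.ker ((P.complex.linearYonedaObj R Y).d n (n + 1)).hom) :
    extMkLinearMap R Y P n f = 0 ↔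
      ∃ g, (P.complex.linearYonedaObj R Y).d ((ComplexShape.up ℕ).prev n) n g = f.1 :=
  extMk_eq_zero_iff_exists P f.1 f.2

/-- The map from the cycles of `Hom(P, Y)` to `Ext^n(X, Y)`. -/
def cyclesToExt :
    (P.complex.linearYonedaObj R Y).cycles n ⟶ (linearExt R n Y).obj (Opposite.op X) :=
  ModuleCat.ofHom (extMkLinearMap R Y P n ∘ₗ
    ((P.complex.linearYonedaObj R Y).iCycles n).hom.codRestrict _ fun z =>
      ConcreteCategory.congr_hom ((P.complex.linearYonedaObj R Y).iCycles_d n (n + 1)) z)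

lemma cyclesToExt_surjective : Function.Surjective (cyclesToExt R Y P n) := by
  intro e
  obtain ⟨f, hf, rfl⟩ := P.extMk_surjective e (n + 1) rfl
  have exact_iCycles := (ShortComplex.moduleCat_exact_iff _).1 (ShortComplex.exact_of_f_is_kernel
    (ShortComplex.mk _ _ ((P.complex.linearYonedaObj R Y).iCycles_d n (n + 1)))
    ((P.complex.linearYonedaObj R Y).cyclesIsKernel n (n + 1) (by simp)))
  obtain ⟨z, rfl⟩ := exact_iCycles f hf
  exact ⟨z, rfl⟩

lemma toCycles_cyclesToExt_exact : Function.Exact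
    ((P.complex.linearYonedaObj R Y).toCycles ((ComplexShape.up ℕ).prev n) n)
    (cyclesToExt R Y P n) := by
  have iCycles_injective : Function.Injective ((P.complex.linearYonedaObj R Y).iCycles n) :=
    (ModuleCat.mono_iff_injective _).1 inferInstance
  have iCycles_toCycles := ConcreteCategory.congr_hom
    ((P.complex.linearYonedaObj R Y).toCycles_i ((ComplexShape.up ℕ).prev n) n)
  exact fun z => (extMkLinearMap_eq_zero_iff R Y P n _).trans (exists_congr fun g =>
    (Eq.congr_left (iCycles_toCycles g).symm).trans iCycles_injective.eq_iff)

/-- `Ext^n(X, Y)` in the derived category is the cohomology of `Hom(P, Y)`. -/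
def homologyIsoExt :
    (P.complex.linearYonedaObj R Y).homology n ≅ (linearExt R n Y).obj (Opposite.op X) :=
  let S := ModuleCat.shortComplexOfCompEqZero _ _
    (toCycles_cyclesToExt_exact R Y P n).linearMap_comp_eq_zero
  have : Epi S.g := (ModuleCat.epi_iff_surjective _).2 (cyclesToExt_surjective R Y P n)
  ((P.complex.linearYonedaObj R Y).homologyIsCokernel _ n rfl).coconePointUniqueUpToIso
    (ModuleCat.shortComplex_exact S (toCycles_cyclesToExt_exact R Y P n)).gIsCokernel

lemma homologyπ_homologyIsoExt_hom :
    (P.complex.linearYonedaObj R Y).homologyπ n ≫ (homologyIsoExt R Y P n).hom =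
      cyclesToExt R Y P n :=
  Limits.IsColimit.comp_coconePointUniqueUpToIso_hom
    ((P.complex.linearYonedaObj R Y).homologyIsCokernel _ n rfl) _
    Limits.WalkingParallelPair.one

variable {P} {X' : C} {P' : ProjectiveResolution X'} {g : X' ⟶ X}

lemma mk₀_comp_extMkLinearMap (φ : ProjectiveResolution.Hom P' P g)
    (f : LinearMap.ker ((P.complex.linearYonedaObj R Y).d n (n + 1)).hom)
    (f' : LinearMap.ker ((P'.complex.linearYonedaObj R Y).d n (n + 1)).hom)
    (h : (linearYonedaObjMap φ.hom Y).f n f.1 = f'.1) :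
    (Ext.mk₀ g).comp (extMkLinearMap R Y P n f) (zero_add n) = extMkLinearMap R Y P' n f' := by
  obtain ⟨_, hf'⟩ := f'
  subst h
  exact ProjectiveResolution.mk₀_comp_extMk f.1 (n + 1) rfl f.2 φ

lemma cyclesToExt_naturality (φ : ProjectiveResolution.Hom P' P g) :
    HomologicalComplex.cyclesMap (linearYonedaObjMap φ.hom Y) n ≫ cyclesToExt R Y P' n =
      cyclesToExt R Y P n ≫ (linearExt R n Y).map g.op := by
  ext z
  exact (mk₀_comp_extMkLinearMap R Y n φ _ _ (ConcreteCategory.congr_hom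
    (HomologicalComplex.cyclesMap_i (linearYonedaObjMap (R := R) φ.hom Y) n) z).symm).symm

lemma homologyIsoExt_hom_naturality (φ : ProjectiveResolution.Hom P' P g) :
    HomologicalComplex.homologyMap (linearYonedaObjMap φ.hom Y) n ≫
        (homologyIsoExt R Y P' n).hom =
      (homologyIsoExt R Y P n).hom ≫ (linearExt R n Y).map g.op := by
  rw [← cancel_epi ((P.complex.linearYonedaObj R Y).homologyπ n),
    HomologicalComplex.homologyπ_naturality_assoc, homologyπ_homologyIsoExt_hom,
    reassoc_of% homologyπ_homologyIsoExt_hom R Y P n, cyclesToExt_naturality]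

/-- A functorial comparison between `Ext^n(-, Y)` defined by left derived functors and
`Ext^n(-, Y)` in the derived category. -/
def flipExtIsoLinearExt [EnoughProjectives C] :
    (_root_.Ext R C n).flip.obj Y ≅ linearExt R n Y :=
  NatIso.ofComponents
    (fun X => (projectiveResolution X.unop).isoExt n Y ≪≫
      homologyIsoExt R Y (projectiveResolution X.unop) n) fun {X X'} f => by
    let φ : ProjectiveResolution.Hom (projectiveResolution X'.unop)
        (projectiveResolution X.unop) f.unop :=
      { hom := ProjectiveResolution.lift f.unop _ _
        hom_f_zero_comp_π_f_zero := by
          simpa using ProjectiveResolution.lift_commutes_zero f.unop _ _ }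
    have isoExt_naturality := isoExt_inv_naturality (R := R) φ n Y
    rw [Iso.inv_comp_eq, ← Category.assoc, Iso.eq_comp_inv] at isoExt_naturality
    refine (Category.assoc _ _ _).symm.trans ?_
    refine (congrArg (· ≫ (homologyIsoExt R Y (projectiveResolution X'.unop) n).hom)
      isoExt_naturality).trans ?_
    simp only [Iso.trans_hom, Category.assoc, homologyIsoExt_hom_naturality, Quiver.Hom.op_unop]

end Comparison

section Localization

open Module Submodule

variable (P : ObjectProperty (ModuleCat.{u} R)) [P.IsSerreClass] (s : Finset R)
  (M : Type u) [AddCommGroup M] [Module R M]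

/-- The canonical map from `M` to the product of the localizations `M_r` for `r ∈ s`. -/
def toPiLocalizedModule : M →ₗ[R] ∀ r : s, LocalizedModule (.powers (r : R)) M :=
  LinearMap.pi fun r => LocalizedModule.mkLinearMap (.powers (r : R)) M

variable {s M}

lemma exists_mem_torsionBySet_of_toPiLocalizedModule_eq_zero {x : M}
    (hx : toPiLocalizedModule s M x = 0) :
    ∃ k, x ∈ torsionBySet R M ((Ideal.span (s : Set R)) ^ k : Ideal R) := by
  have span_le_radical : Ideal.span (s : Set R) ≤ (Ideal.torsionOf R M x).radical := by
    rw [Ideal.span_le]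
    intro r hr
    have mk_eq_zero : LocalizedModule.mkLinearMap (.powers r) M x = 0 := congrFun hx ⟨r, hr⟩
    obtain ⟨⟨_, k, rfl⟩, hk⟩ := (IsLocalizedModule.eq_zero_iff (.powers r) _).1 mk_eq_zero
    exact ⟨k, hk⟩
  obtain ⟨k, hk⟩ := Ideal.exists_pow_le_of_le_radical_of_fg span_le_radical ⟨s, rfl⟩
  exact ⟨k, (mem_torsionBySet_iff _ _).2 fun r => hk r.2⟩

lemma prop_ker_toPiLocalizedModule [P.IsClosedUnderColimitsOfShape ℕ]
    (hM : P (ModuleCat.of R (torsionBySet R M (s : Set R)))) :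
    P (ModuleCat.of R (LinearMap.ker (toPiLocalizedModule s M))) := by
  refine prop_of_forall_mem_torsionBySet_pow P
    (prop_torsionBySet_of_injective P _ _ (Submodule.subtype_injective _) hM) fun x => ?_
  obtain ⟨k, hk⟩ := exists_mem_torsionBySet_of_toPiLocalizedModule_eq_zero x.2
  exact ⟨k, (mem_torsionBySet_iff _ _).2 fun r =>
    Subtype.ext ((mem_torsionBySet_iff _ _).1 hk r)⟩

open Abelian

lemma subsingleton_ext_of_isTorsionBy {X N : ModuleCat.{u} R} {r : R} (hX : IsTorsionBy R X r)
    (hN : IsUnit (algebraMap R (End R N) r)) (n : ℕ) : Subsingleton (Ext.{u} X N n) := by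
  refine subsingleton_of_forall_eq 0 fun e => ?_
  obtain ⟨φ, hφ⟩ := hN.exists_right_inv
  have smul_id_eq_zero : r • 𝟙 X = 0 := by
    ext x
    exact hX (x := x)
  have comp_smul_id : ModuleCat.ofHom φ ≫ (r • 𝟙 N) = 𝟙 N := by
    ext x
    exact LinearMap.congr_fun hφ x
  calc e = r • e.comp (Ext.mk₀ (ModuleCat.ofHom φ)) (add_zero n) := by
        rw [Ext.smul_eq_comp_mk₀, Ext.comp_assoc_of_third_deg_zero, Ext.mk₀_comp_mk₀,
          comp_smul_id, Ext.comp_mk₀_id]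
    _ = (Ext.mk₀ (r • 𝟙 X)).comp (e.comp (Ext.mk₀ (ModuleCat.ofHom φ)) (add_zero n))
          (zero_add n) := by
        rw [Ext.mk₀_smul, Ext.smul_comp, Ext.mk₀_id_comp]
    _ = 0 := by rw [smul_id_eq_zero, Ext.mk₀_zero, Ext.zero_comp]

lemma subsingleton_ext_pi {ι : Type u} [Finite ι] (X : ModuleCat.{u} R) (N : ι → ModuleCat.{u} R)
    (n : ℕ) [∀ i, Subsingleton (Ext.{u} X (N i) n)] :
    Subsingleton (Ext.{u} X (ModuleCat.of R (∀ i, N i)) n) := by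
  have := Fintype.ofFinite ι
  exact (Ext.addEquivBiproduct X (Limits.biconeIsBilimitOfLimitConeOfIsLimit
    (ModuleCat.productConeIsLimit N)) n).subsingleton

lemma subsingleton_ext_pi_localizedModule {X : ModuleCat.{u} R} {k : ℕ}
    (hX : IsTorsionBySet R X ((Ideal.span (s : Set R)) ^ k : Ideal R)) (n : ℕ) :
    Subsingleton (Ext.{u} X
      (ModuleCat.of R (∀ r : s, LocalizedModule (.powers (r : R)) M)) n) := by
  have (r : s) : Subsingleton
      (Ext.{u} X (ModuleCat.of R (LocalizedModule (.powers (r : R)) M)) n) :=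
    subsingleton_ext_of_isTorsionBy (r := (r : R) ^ k)
      (fun x => hX (a := ⟨_, Ideal.pow_mem_pow (Ideal.subset_span r.2) k⟩))
      (IsLocalizedModule.map_units (S := .powers (r : R))
        (LocalizedModule.mkLinearMap (.powers (r : R)) M) ⟨_, k, rfl⟩) n
  exact subsingleton_ext_pi X
    (fun r : s => ModuleCat.of R (LocalizedModule (.powers (r : R)) M)) n

end Localization

section Coherent

open Module

lemma IsCoherentRing.finitePresentation_of_injective (hR : IsCoherentRing R) {m : ℕ}
    {K : Type u} [AddCommGroup K] [Module R K] [Module.Finite R K]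
    (f : K →ₗ[R] (Fin m → R)) (hf : Function.Injective f) : FinitePresentation R K := by
  induction m generalizing K with
  | zero =>
    have : Subsingleton K := hf.subsingleton
    infer_instance
  | succ m ih =>
    let p : K →ₗ[R] R := LinearMap.proj 0 ∘ₗ f
    have : FinitePresentation R (LinearMap.range p) := hR _ (Finite.iff_fg.1 inferInstance)
    have : Module.Finite R (LinearMap.ker p.rangeRestrict) :=
      Finite.iff_fg.2 (FinitePresentation.fg_ker _ p.surjective_rangeRestrict)
    have : FinitePresentation R (LinearMap.ker p.rangeRestrict) := by
      refine ih (LinearMap.funLeft R R Fin.succ ∘ₗ f ∘ₗ (LinearMap.ker _).subtype) ?_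
      refine (injective_iff_map_eq_zero _).2 fun x hx => Subtype.ext (hf ?_)
      rw [ZeroMemClass.coe_zero, map_zero]
      ext i
      exact Fin.cases (congrArg Subtype.val x.2) (congrFun hx) i
    exact finitePresentation_of_ker p.rangeRestrict p.surjective_rangeRestrict

open Abelian

variable (P : ObjectProperty (ModuleCat.{u} R)) [P.IsSerreClass]

lemma prop_linearMap_of_finite (X : Type u) [AddCommGroup X] [Module R X] [Module.Finite R X]
    {N : Type u} [AddCommGroup N] [Module R N] (hN : P (ModuleCat.of R N)) :
    P (ModuleCat.of R (X →ₗ[R] N)) := by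
  obtain ⟨t, span_eq_top⟩ := Module.Finite.fg_top (R := R) (M := X)
  let evaluation : (X →ₗ[R] N) →ₗ[R] ∀ _ : t, N := LinearMap.pi fun x => LinearMap.applyₗ x.1
  exact prop_of_injective P evaluation
    (fun φ ψ h => LinearMap.ext_on span_eq_top fun x hx => congrFun h ⟨x, hx⟩)
    (prop_pi P _ fun _ => hN)

lemma prop_ext_of_finitePresentation (hR : IsCoherentRing R) {N : ModuleCat.{u} R} (hN : P N)
    (n : ℕ) (X : ModuleCat.{u} R) [FinitePresentation R X] :
    P (ModuleCat.of R (Ext.{u} X N n)) := by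
  induction n generalizing X with
  | zero =>
    exact prop_of_injective P (Ext.linearEquiv₀.trans ModuleCat.homLinearEquiv).toLinearMap
      (LinearEquiv.injective _) (prop_linearMap_of_finite P X hN)
  | succ n ih =>
    obtain ⟨m, f, hf⟩ := Module.Finite.exists_fin' R X
    have : Module.Finite R (LinearMap.ker f) :=
      Module.Finite.iff_fg.2 (FinitePresentation.fg_ker f hf)
    have : FinitePresentation R f.shortComplexKer.X₁ :=
      hR.finitePresentation_of_injective (LinearMap.ker f).subtype (Submodule.subtype_injective _)
    have hS := LinearMap.shortExact_shortComplexKer hf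
    exact prop_of_surjective P (hS.extClass.precompOfLinear R N (add_comm 1 n))
      (precomp_extClass_surjective_of_projective_X₂ N hS n) (ih _)

end Coherent

section ExtGrade

open Abelian Limits

variable (P : ObjectProperty (ModuleCat.{u} R)) (a : Ideal R)

/-- The properties shared by the evaluation at `R ⧸ a` and the colimit of the evaluations at
`R ⧸ a ^ k` which make `G`, applied to `X ↦ Ext^i(X, M)`, define a grade of `a` on `M` with
respect to the class `P`. -/
structure IsGradeFunctor (G : ((ModuleCat.{u} R)ᵒᵖ ⥤ ModuleCat.{u} R) ⥤ ModuleCat.{u} R) :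
    Prop where
  prop_obj : ∀ V : (ModuleCat.{u} R)ᵒᵖ ⥤ ModuleCat.{u} R,
    (∀ (X : ModuleCat.{u} R) (k : ℕ), Module.FinitePresentation R X →
      Module.IsTorsionBySet R X (a ^ k : Ideal R) → P (V.obj (Opposite.op X))) → P (G.obj V)
  prop_torsionBySet : ∀ M : ModuleCat.{u} R, P (G.obj (linearExt R 0 M)) →
    P (ModuleCat.of R (Submodule.torsionBySet R M a))

variable {P a} [P.IsSerreClass] {G G' : ((ModuleCat.{u} R)ᵒᵖ ⥤ ModuleCat.{u} R) ⥤ ModuleCat.{u} R}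

namespace IsGradeFunctor

lemma prop_linearExt (hG : IsGradeFunctor P a G) (hR : IsCoherentRing R) {N : ModuleCat.{u} R}
    (hN : P N) (n : ℕ) : P (G.obj (linearExt R n N)) :=
  hG.prop_obj _ fun X _ _ _ => prop_ext_of_finitePresentation P hR hN n X

lemma prop_linearExt_pi_localizedModule {s : Finset R}
    (hG : IsGradeFunctor P (Ideal.span (s : Set R)) G) (M : Type u) [AddCommGroup M] [Module R M]
    (n : ℕ) : P (G.obj (linearExt R n
      (ModuleCat.of R (∀ r : s, LocalizedModule (.powers (r : R)) M)))) :=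
  hG.prop_obj _ fun X _ _ hX =>
    have : Subsingleton (Ext.{u} X (ModuleCat.of R
        (∀ r : s, LocalizedModule (.powers (r : R)) M)) n) :=
      subsingleton_ext_pi_localizedModule hX n
    prop_of_subsingleton P

variable [P.IsClosedUnderColimitsOfShape ℕ]
  [G.PreservesZeroMorphisms] [G.PreservesHomology]
  [G'.PreservesZeroMorphisms] [G'.PreservesHomology]

theorem prop_linearExt_of_forall_lt (hG : IsGradeFunctor P a G) (hG' : IsGradeFunctor P a G')
    (hR : IsCoherentRing R) (ha : a.FG) {n : ℕ} {M : ModuleCat.{u} R}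
    (hM : ∀ i < n, P (G.obj (linearExt R i M))) : ∀ i < n, P (G'.obj (linearExt R i M)) := by
  obtain ⟨s, rfl⟩ := ha
  induction n generalizing M with
  | zero => exact fun _ hi => absurd hi (Nat.not_lt_zero _)
  | succ n ih =>
    let f := ModuleCat.ofHom (toPiLocalizedModule s M)
    have prop_torsion : P (ModuleCat.of R (Submodule.torsionBySet R M (s : Set R))) := by
      rw [Submodule.torsionBySet_eq_torsionBySet_span]
      exact hG.prop_torsionBySet M (hM 0 n.succ_pos)
    have prop_kernel : P (kernel f) :=
      P.prop_of_iso (ModuleCat.kernelIsoKer f).symm (prop_ker_toPiLocalizedModule P prop_torsion)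
    have prop_ext_cokernel (i : ℕ) (hi : i < n) : P (G.obj (linearExt R i (cokernel f))) :=
      (prop_linearExt_succ_iff_cokernel i P G f (hG.prop_linearExt hR prop_kernel)
        (hG.prop_linearExt_pi_localizedModule M)).1 (hM (i + 1) (Nat.succ_lt_succ hi))
    have prop_ext_kernel' := hG'.prop_linearExt hR prop_kernel
    have prop_ext_pi' := hG'.prop_linearExt_pi_localizedModule M
    rintro (_ | i) hi
    · exact prop_linearExt_zero_of_kernel P G' f prop_ext_kernel' prop_ext_pi'
    · exact (prop_linearExt_succ_iff_cokernel i P G' f prop_ext_kernel' prop_ext_pi').2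
        (ih prop_ext_cokernel i (Nat.lt_of_succ_lt_succ hi))

theorem forall_lt_prop_linearExt_iff (hG : IsGradeFunctor P a G) (hG' : IsGradeFunctor P a G')
    (hR : IsCoherentRing R) (ha : a.FG) (n : ℕ) (M : ModuleCat.{u} R) :
    (∀ i < n, P (G.obj (linearExt R i M))) ↔ ∀ i < n, P (G'.obj (linearExt R i M)) :=
  ⟨hG.prop_linearExt_of_forall_lt hG' hR ha, hG'.prop_linearExt_of_forall_lt hG hR ha⟩

end IsGradeFunctor

lemma finitePresentation_quotient (ha : a.FG) : Module.FinitePresentation R (R ⧸ a) :=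
  Module.finitePresentation_of_surjective a.mkQ a.mkQ_surjective (by rwa [a.ker_mkQ])

lemma isTorsionBySet_quotient (b : Ideal R) : Module.IsTorsionBySet R (R ⧸ b) b := by
  rw [Module.isTorsionBySet_iff_subset_annihilator, Ideal.annihilator_quotient]

lemma prop_torsionBySet_of_prop_ext_zero (b : Ideal R) {M : ModuleCat.{u} R}
    (h : P (ModuleCat.of R (Ext.{u} (ModuleCat.of R (R ⧸ b)) M 0))) :
    P (ModuleCat.of R (Submodule.torsionBySet R M b)) := by
  let evalOne : ((R ⧸ b) →ₗ[R] M) →ₗ[R] Submodule.torsionBySet R M b :=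
    (LinearMap.applyₗ 1).codRestrict _ fun φ => (Submodule.mem_torsionBySet_iff _ _).2 fun r => by
      rw [LinearMap.applyₗ_apply_apply, ← map_smul, isTorsionBySet_quotient b (a := r), map_zero]
  have evalOne_surjective : Function.Surjective evalOne := fun x =>
    ⟨b.liftQ (LinearMap.toSpanSingleton R M x) fun r hr =>
      (Submodule.mem_torsionBySet_iff _ _).1 x.2 ⟨r, hr⟩, Subtype.ext (one_smul R x.1)⟩
  exact prop_of_surjective P
    (evalOne ∘ₗ (Ext.linearEquiv₀.trans ModuleCat.homLinearEquiv).toLinearMap)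
    (evalOne_surjective.comp (LinearEquiv.surjective _)) h

lemma isGradeFunctor_evaluation (ha : a.FG) : IsGradeFunctor P a
    ((evaluation _ _).obj (Opposite.op (ModuleCat.of R (R ⧸ a)))) where
  prop_obj _ h := h _ 1 (finitePresentation_quotient ha)
    (by simpa only [pow_one] using isTorsionBySet_quotient a)
  prop_torsionBySet _ h := prop_torsionBySet_of_prop_ext_zero a h

instance : AB5OfSize.{0, 0} (ModuleCat.{u} R) := AB5OfSize_of_univLE.{0, 0, u, u} _

variable (a) in
/-- The functor whose value at `Ext^i(-, M)` is the local cohomology `H^i_a(M)`. -/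
abbrev colimitIdealPowers : ((ModuleCat.{u} R)ᵒᵖ ⥤ ModuleCat.{u} R) ⥤ ModuleCat.{u} R :=
  (Functor.whiskeringLeft _ _ _).obj
    (localCohomology.ringModIdeals (localCohomology.idealPowersDiagram a)).op ⋙ colim

lemma mono_ringModIdeals_map_linearExt_zero {D : Type} [SmallCategory D] (I : D ⥤ Ideal R)
    (M : ModuleCat.{u} R) {i j : Dᵒᵖ} (f : i ⟶ j) :
    Mono (((localCohomology.ringModIdeals I).op ⋙ linearExt R 0 M).map f) := by
  have : Epi (((localCohomology.ringModIdeals I).op.map f).unop) :=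
    (ModuleCat.epi_iff_surjective _).2 fun y => by
      obtain ⟨y, rfl⟩ := Submodule.Quotient.mk_surjective _ y
      exact ⟨Submodule.Quotient.mk y, rfl⟩
  exact (ModuleCat.mono_iff_injective _).2 (Ext.precomp_mk₀_injective_of_epi M _)

lemma isGradeFunctor_colimitIdealPowers [P.IsClosedUnderColimitsOfShape ℕ] (ha : a.FG) :
    IsGradeFunctor P a (colimitIdealPowers a) where
  prop_obj V h := by
    have : P.IsClosedUnderColimitsOfShape ℕᵒᵖᵒᵖ := .of_equivalence (opOpEquivalence ℕ).symm
    exact P.prop_colimit _ fun j => h _ j.unop.unop (finitePresentation_quotient ha.pow)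
      (isTorsionBySet_quotient _)
  prop_torsionBySet M h := by
    let F := (localCohomology.ringModIdeals (localCohomology.idealPowersDiagram a)).op ⋙
      linearExt R 0 M
    have {i j : ℕᵒᵖᵒᵖ} (f : i ⟶ j) : Mono (F.map f) :=
      mono_ringModIdeals_map_linearExt_zero (localCohomology.idealPowersDiagram a) M f
    have : Mono (colimit.ι F (Opposite.op (Opposite.op 1))) :=
      (colimit.isColimit F).mono_ι_app_of_isFiltered _
    have prop_ext := P.prop_of_mono (colimit.ι F (Opposite.op (Opposite.op 1))) h
    rw [← pow_one a]
    exact prop_torsionBySet_of_prop_ext_zero (a ^ 1) prop_ext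

variable (a) in
/-- Local cohomology as a colimit of modules `Ext^n(R ⧸ a ^ k, M)` in the derived category. -/
def localCohomologyIso (n : ℕ) (M : ModuleCat.{u} R) :
    (localCohomology a n).obj M ≅ (colimitIdealPowers a).obj (linearExt R n M) :=
  colimitObjIsoColimitCompEvaluation
      (localCohomology.diagram (localCohomology.idealPowersDiagram a) n) M ≪≫
    (colimitIdealPowers a).mapIso (flipExtIsoLinearExt R M n)

end ExtGrade

namespace IsTorsionTheory

variable {T : Set (ModuleCat.{u} R)} (hT : IsTorsionTheory R T)
include hT

lemma mem_of_mono {N N' : ModuleCat.{u} R} (f : N ⟶ N') [Mono f] (h : N' ∈ T) : N ∈ T :=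
  hT.mem_of_iso (LinearEquiv.ofInjective f.hom
    ((ModuleCat.mono_iff_injective f).1 inferInstance)).symm.toModuleIso
    (hT.submodule_mem h (LinearMap.range f.hom))

lemma mem_of_epi {N N' : ModuleCat.{u} R} (f : N ⟶ N') [Epi f] (h : N ∈ T) : N' ∈ T :=
  hT.mem_of_iso (f.hom.quotKerEquivOfSurjective
    ((ModuleCat.epi_iff_surjective f).1 inferInstance)).toModuleIso
    (hT.quotient_mem h (LinearMap.ker f.hom))

lemma range_mem {N N' : ModuleCat.{u} R} (f : N ⟶ N') (h : N ∈ T) :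
    ModuleCat.of R (LinearMap.range f.hom) ∈ T :=
  hT.mem_of_iso f.hom.quotKerEquivRange.toModuleIso (hT.quotient_mem h (LinearMap.ker f.hom))

lemma mem_of_shortExact {S : ShortComplex (ModuleCat.{u} R)} (hS : S.ShortExact)
    (h₁ : S.X₁ ∈ T) (h₃ : S.X₃ ∈ T) : S.X₂ ∈ T := by
  refine hT.ext_mem (LinearMap.range S.f.hom) (hT.range_mem S.f h₁) ?_
  rw [hS.exact.moduleCat_range_eq_ker]
  exact hT.mem_of_iso (S.g.hom.quotKerEquivOfSurjective hS.moduleCat_surjective_g).symm.toModuleIso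
    h₃

lemma isSerreClass (hne : T.Nonempty) :
    ObjectProperty.IsSerreClass (fun N : ModuleCat.{u} R => N ∈ T) where
  exists_zero := by
    obtain ⟨N, hN⟩ := hne
    exact ⟨ModuleCat.of R (⊥ : Submodule R N), ModuleCat.isZero_of_subsingleton _,
      hT.submodule_mem hN ⊥⟩
  prop_of_mono f _ h := hT.mem_of_mono f h
  prop_of_epi f _ h := hT.mem_of_epi f h
  prop_X₂_of_shortExact hS h₁ h₃ := hT.mem_of_shortExact hS h₁ h₃

lemma isClosedUnderColimitsOfShape (J : Type*) [Category* J] [IsFiltered J] [Small.{u} J] :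
    ObjectProperty.IsClosedUnderColimitsOfShape (fun N : ModuleCat.{u} R => N ∈ T) J where
  colimitsOfShape_le := by
    rintro N ⟨c⟩
    have := IsFiltered.nonempty (C := J)
    let S (j : J) : Submodule R N := LinearMap.range (c.ι.app j).hom
    have S_le {i j : J} (f : i ⟶ j) : S i ≤ S j := by
      rintro _ ⟨x, rfl⟩
      exact ⟨c.diag.map f x, ConcreteCategory.congr_hom (c.ι.naturality f) x⟩
    have mkQ_eq_zero : ModuleCat.ofHom (iSup S).mkQ = 0 := c.isColimit.hom_ext fun j => by
      ext x
      exact (Submodule.Quotient.mk_eq_zero _).2 (Submodule.mem_iSup_of_mem j ⟨x, rfl⟩)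
    have iSup_S : iSup S = ⊤ := by
      rw [← (iSup S).ker_mkQ]
      exact LinearMap.ker_eq_top.2 (congrArg ModuleCat.Hom.hom mkQ_eq_zero)
    have directed_S : Directed (· ≤ ·) S := fun i j =>
      ⟨IsFiltered.max i j, S_le (IsFiltered.leftToMax i j), S_le (IsFiltered.rightToMax i j)⟩
    let e := (equivShrink.{u} J).symm
    have : Nonempty (Shrink.{u} J) := e.nonempty
    have directed_S_e : Directed (· ≤ ·) (S ∘ e) := by
      rw [← directedOn_range, e.surjective.range_comp, directedOn_range]
      exact directed_S
    exact hT.directed_mem (S ∘ e) directed_S_e (fun i => hT.range_mem _ (c.prop_diag_obj _))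
      (e.iSup_comp.trans iSup_S)

end IsTorsionTheory

lemma natCast_le_sInf_image_iff (s : Set ℕ) (n : ℕ) :
    (n : ℕ∞) ≤ sInf ((↑· : ℕ → ℕ∞) '' {i | i ∉ s}) ↔ ∀ i < n, i ∈ s := by
  simp only [le_sInf_iff, Set.forall_mem_image, Set.mem_ofPred_eq, Nat.cast_le]
  exact forall_congr' fun i => by rw [← not_lt]; exact not_imp_not

theorem tEgrade_eq_tHgrade_general (hR : IsCoherentRing R) (P : ObjectProperty (ModuleCat.{u} R))
    [P.IsSerreClass] [P.IsClosedUnderColimitsOfShape ℕ] (a : Ideal R) (ha : a.FG)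
    (M : Type u) [AddCommGroup M] [Module R M] :
    TEgrade {N | P N} a M = THgrade {N | P N} a M := by
  refine ENat.eq_of_forall_natCast_le_iff fun n => ?_
  have prop_ext_iff (i : ℕ) := P.prop_iff_of_iso
    ((flipExtIsoLinearExt R (ModuleCat.of R M) i).app (Opposite.op (ModuleCat.of R (R ⧸ a))))
  have prop_localCohomology_iff (i : ℕ) := P.prop_iff_of_iso
    (localCohomologyIso a i (ModuleCat.of R M))
  calc (n : ℕ∞) ≤ TEgrade {N | P N} a M
    _ ↔ ∀ i < n, P (((Ext R (ModuleCat.{u} R) i).obj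
          (Opposite.op (ModuleCat.of R (R ⧸ a)))).obj (ModuleCat.of R M)) :=
        natCast_le_sInf_image_iff {i | P _} n
    _ ↔ ∀ i < n, P ((linearExt R i (ModuleCat.of R M)).obj
          (Opposite.op (ModuleCat.of R (R ⧸ a)))) :=
        forall₂_congr fun i _ => prop_ext_iff i
    _ ↔ ∀ i < n, P ((colimitIdealPowers a).obj (linearExt R i (ModuleCat.of R M))) :=
        (isGradeFunctor_evaluation ha).forall_lt_prop_linearExt_iff
          (isGradeFunctor_colimitIdealPowers ha) hR ha n (ModuleCat.of R M)
    _ ↔ ∀ i < n, P ((localCohomology a i).obj (ModuleCat.of R M)) :=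
        forall₂_congr fun i _ => (prop_localCohomology_iff i).symm
    _ ↔ n ≤ THgrade {N | P N} a M := (natCast_le_sInf_image_iff {i | P _} n).symm

/-- **Theorem (Ext grade = local cohomology grade over coherent rings).** Let `R` be a
coherent commutative ring, `𝔗` a torsion theory of `R`-modules, `𝔞` a finitely generated
ideal of `R` and `M` an `R`-module. Then `𝔗-Egrade_R(𝔞, M) = 𝔗-Hgrade_R(𝔞, M)`. -/
theorem tEgrade_eq_tHgrade (hR : IsCoherentRing R) (T : Set (ModuleCat.{u} R))
    (hT : IsTorsionTheory R T) (a : Ideal R) (ha : a.FG)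
    (M : Type u) [AddCommGroup M] [Module R M] :
    TEgrade T a M = THgrade T a M := by
  obtain rfl | hne := T.eq_empty_or_nonempty
  · simp [TEgrade, THgrade]
  have := hT.isSerreClass hne
  have := hT.isClosedUnderColimitsOfShape ℕ
  exact tEgrade_eq_tHgrade_general hR (fun N => N ∈ T) a ha M
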